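/- Let ρ_ABC be a density matrix (positive semidefinite with trace 1) on the tensor product of finite-dimensional complex Hilbert spaces H_A ⊗ H_B ⊗ H_C. Then for every α ∈ (1/2,1), Tr{ ( ρ_AC^{(1−α)/(2α)} ρ_C^{(α−1)/(2α)} ρ_BC^{(1−α)/α} ρ_C^{(α−1)/(2α)} ρ_AC^{(1−α)/(2α)} )^{α/(1−α)} } ≤ 1. -/

import Mathlib

open scoped ComplexOrder Matrix

/-- Real power of a Hermitian matrix, taken on its support:
for `A = ∑ᵢ λᵢ |i⟩⟨i|`, `mpow A t = ∑_{i : λᵢ ≠ 0} λᵢ^t |i⟩⟨i|`.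
(For non-Hermitian input we return the junk value `0`.) -/
noncomputable def mpow {n : Type*} [Fintype n] [DecidableEq n]
    (A : Matrix n n ℂ) (t : ℝ) : Matrix n n ℂ :=
  if h : A.IsHermitian then
    (h.eigenvectorUnitary : Matrix n n ℂ) *
      Matrix.diagonal (fun i => ((if h.eigenvalues i = 0 then (0:ℝ)
        else (h.eigenvalues i) ^ t) : ℂ)) *
      (star h.eigenvectorUnitary : Matrix n n ℂ)
  else 0

/-- The reduced matrix `ρ_AC` of a tripartite matrix, viewed as the operator
`ρ_AC ⊗ I_B` on the full space. -/
noncomputable def redAC {dA dB dC : ℕ}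
    (ρ : Matrix (Fin dA × Fin dB × Fin dC) (Fin dA × Fin dB × Fin dC) ℂ) :
    Matrix (Fin dA × Fin dB × Fin dC) (Fin dA × Fin dB × Fin dC) ℂ :=
  fun x y => (if x.2.1 = y.2.1 then (1:ℂ) else 0) *
    ∑ m : Fin dB, ρ (x.1, m, x.2.2) (y.1, m, y.2.2)

/-- The reduced matrix `ρ_BC` of a tripartite matrix, viewed as the operator
`I_A ⊗ ρ_BC` on the full space. -/
noncomputable def redBC {dA dB dC : ℕ}
    (ρ : Matrix (Fin dA × Fin dB × Fin dC) (Fin dA × Fin dB × Fin dC) ℂ) :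
    Matrix (Fin dA × Fin dB × Fin dC) (Fin dA × Fin dB × Fin dC) ℂ :=
  fun x y => (if x.1 = y.1 then (1:ℂ) else 0) * ∑ m : Fin dA, ρ (m, x.2) (m, y.2)

/-- The reduced matrix `ρ_C` of a tripartite matrix, viewed as the operator
`I_A ⊗ I_B ⊗ ρ_C` on the full space. -/
noncomputable def redC {dA dB dC : ℕ}
    (ρ : Matrix (Fin dA × Fin dB × Fin dC) (Fin dA × Fin dB × Fin dC) ℂ) :
    Matrix (Fin dA × Fin dB × Fin dC) (Fin dA × Fin dB × Fin dC) ℂ :=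
  fun x y => (if x.1 = y.1 then (1:ℂ) else 0) * (if x.2.1 = y.2.1 then (1:ℂ) else 0) *
    ∑ m : Fin dA, ∑ l : Fin dB, ρ (m, l, x.2.2) (m, l, y.2.2)

/-!
Put `s = (1 - α) / α`, so that `0 < s ≤ 1`, and let
`F z = ρ_BC ^ (z / 2) * ρ_C ^ (-z / 2) * ρ_AC ^ (z / 2)`; the claim bounds `T = tr N ^ (1 / s)` for
`N = (F s)ᴴ * F s`. On `re z = 0` the matrix `F z` is a product of partial isometries, hence a
contraction. On `re z = 1` its squared Hilbert–Schmidt norm is exactly `tr ρ`, because tracing out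
`A` and then `B` makes all powers of `ρ_C` cancel. Pairing `F z` with
`N ^ (1 / s - 1 / 2 - z / (2 * s)) * (F s)ᴴ` gives a function which equals `T` at `z = s` and which,
by Cauchy–Schwarz, is at most `T` on `re z = 0` and `√(T * tr ρ)` on `re z = 1`. The three lines
theorem yields `T ≤ T ^ (1 - s) * √(T * tr ρ) ^ s`, that is, `T ≤ tr ρ`.
-/

section SpectralCalculus

open Matrix Polynomial

variable {m n : Type*} [Fintype m] [DecidableEq m] [Fintype n] [DecidableEq n]
  {A : Matrix m m ℂ} {B : Matrix n n ℂ}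

/-- The functional calculus `f ↦ f(A)` of a Hermitian matrix `A`, for arbitrary complex-valued
functions of a real variable: `f` is applied to the eigenvalues in an orthonormal eigenbasis. -/
noncomputable def spectralHom (hA : A.IsHermitian) : (ℝ → ℂ) →⋆ₐ[ℂ] Matrix m m ℂ :=
  (Unitary.conjStarAlgAut ℂ _ hA.eigenvectorUnitary : Matrix m m ℂ →⋆ₐ[ℂ] Matrix m m ℂ).comp
    { (diagonalAlgHom ℂ).comp
        (AlgHom.pi fun i => Pi.evalAlgHom ℂ (fun _ : ℝ => ℂ) (hA.eigenvalues i)) with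
      map_star' := fun f =>
        (diagonal_conjTranspose (fun i => f (hA.eigenvalues i) : m → ℂ)).symm }

lemma spectralHom_apply (hA : A.IsHermitian) (f : ℝ → ℂ) :
    spectralHom hA f = (hA.eigenvectorUnitary : Matrix m m ℂ) *
      diagonal (fun i => f (hA.eigenvalues i)) * (star hA.eigenvectorUnitary : Matrix m m ℂ) :=
  rfl

lemma spectralHom_congr (hA : A.IsHermitian) {f g : ℝ → ℂ}
    (hfg : ∀ i, f (hA.eigenvalues i) = g (hA.eigenvalues i)) :
    spectralHom hA f = spectralHom hA g := by
  simp only [spectralHom_apply, hfg]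

lemma spectralHom_ofReal (hA : A.IsHermitian) : spectralHom hA (fun x => (x : ℂ)) = A :=
  hA.spectral_theorem.symm

lemma spectralHom_eq_aeval (hA : A.IsHermitian) {f : ℝ → ℂ} {q : ℂ[X]}
    (hq : ∀ i, q.eval (hA.eigenvalues i : ℂ) = f (hA.eigenvalues i)) :
    spectralHom hA f = aeval A q := by
  conv_rhs => rw [← spectralHom_ofReal hA, aeval_algHom_apply, aeval_pi_apply]
  exact spectralHom_congr hA fun i => by rw [← hq i, coe_aeval_eq_eval]

lemma map_spectralHom (φ : Matrix m m ℂ →ₐ[ℂ] Matrix n n ℂ) (hA : A.IsHermitian)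
    (hB : B.IsHermitian) (hAB : φ A = B) (f : ℝ → ℂ) :
    φ (spectralHom hA f) = spectralHom hB f := by
  classical
  -- `f` agrees with one polynomial on both spectra, and `φ` commutes with polynomials.
  let s : Finset ℝ := Finset.univ.image hA.eigenvalues ∪ Finset.univ.image hB.eigenvalues
  have interpolate_eval {x : ℝ} (hx : x ∈ s) :
      (Lagrange.interpolate s Complex.ofReal f).eval (x : ℂ) = f x :=
    Lagrange.eval_interpolate_at_node f Complex.ofReal_injective.injOn hx
  rw [spectralHom_eq_aeval hA fun i => interpolate_eval (by simp [s]),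
    spectralHom_eq_aeval hB fun i => interpolate_eval (by simp [s]), ← aeval_algHom_apply, hAB]

end SpectralCalculus

section ComplexPower

open Matrix
open scoped MatrixOrder

/-- The complex power `x ^ z`, set to `0` at `x = 0` for every exponent. -/
noncomputable def supportCpow (z : ℂ) (x : ℝ) : ℂ := if x = 0 then 0 else (x : ℂ) ^ z

lemma supportCpow_mul (z w : ℂ) : supportCpow z * supportCpow w = supportCpow (z + w) := by
  funext x
  by_cases hx : x = 0
  · simp [supportCpow, hx]
  · simp [supportCpow, hx, Complex.cpow_add]

lemma supportCpow_one (x : ℝ) : supportCpow 1 x = x := by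
  by_cases hx : x = 0 <;> simp [supportCpow, hx]

lemma star_supportCpow (z : ℂ) {x : ℝ} (hx : 0 ≤ x) :
    star (supportCpow z x) = supportCpow (star z) x := by
  by_cases h0 : x = 0
  · simp [supportCpow, h0]
  · have harg : (x : ℂ).arg ≠ Real.pi := by
      simpa [Complex.arg_ofReal_of_nonneg hx] using Real.pi_ne_zero.symm
    simpa [supportCpow, h0] using (Complex.cpow_conj (x : ℂ) z harg).symm

variable {m n : Type*} [Fintype m] [DecidableEq m] [Fintype n] [DecidableEq n]
  {A : Matrix m m ℂ} {B : Matrix n n ℂ}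

/-- The complex power `A ^ z` of a positive semidefinite matrix, taken on the support of `A`; in
particular `A ^ 0` is the support projection. -/
noncomputable def matrixCpow (hA : A.PosSemidef) (z : ℂ) : Matrix m m ℂ :=
  spectralHom hA.isHermitian (supportCpow z)

lemma matrixCpow_mul_matrixCpow (hA : A.PosSemidef) (z w : ℂ) :
    matrixCpow hA z * matrixCpow hA w = matrixCpow hA (z + w) := by
  simp only [matrixCpow, ← map_mul, supportCpow_mul]

lemma matrixCpow_one (hA : A.PosSemidef) : matrixCpow hA 1 = A :=
  (spectralHom_congr _ fun _ => supportCpow_one _).trans (spectralHom_ofReal hA.isHermitian)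

lemma matrixCpow_mul_self (hA : A.PosSemidef) (z : ℂ) :
    matrixCpow hA z * A = matrixCpow hA (z + 1) := by
  rw [← matrixCpow_mul_matrixCpow, matrixCpow_one]

lemma conjTranspose_matrixCpow (hA : A.PosSemidef) (z : ℂ) :
    (matrixCpow hA z)ᴴ = matrixCpow hA (star z) := by
  rw [matrixCpow, ← star_eq_conjTranspose, ← map_star]
  exact spectralHom_congr _ fun i => star_supportCpow z (hA.eigenvalues_nonneg i)

lemma map_matrixCpow (φ : Matrix m m ℂ →ₐ[ℂ] Matrix n n ℂ) (hA : A.PosSemidef)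
    (hB : B.PosSemidef) (hAB : φ A = B) (z : ℂ) :
    φ (matrixCpow hA z) = matrixCpow hB z :=
  map_spectralHom φ hA.isHermitian hB.isHermitian hAB _

lemma mpow_eq_matrixCpow (hA : A.PosSemidef) (t : ℝ) : mpow A t = matrixCpow hA t := by
  rw [mpow, dif_pos hA.isHermitian, matrixCpow, spectralHom_apply]
  congr 3
  funext i
  have hx := hA.eigenvalues_nonneg i
  generalize hA.isHermitian.eigenvalues i = x at *
  by_cases h0 : x = 0
  · simp [supportCpow, h0]
  · -- The power in `mpow` elaborates to the C⋆-algebraic `CFC.rpow` on `ℂ`.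
    simp only [supportCpow, h0, if_false]
    lift x to NNReal using hx
    exact (CFC.rpow_algebraMap (A := ℂ)).trans (Complex.ofReal_cpow x.2 t)

lemma matrixCpow_mul_conjTranspose (hA : A.PosSemidef) (z : ℂ) :
    matrixCpow hA z * (matrixCpow hA z)ᴴ = matrixCpow hA (2 * z.re : ℝ) := by
  rw [conjTranspose_matrixCpow, matrixCpow_mul_matrixCpow, Complex.star_def, Complex.add_conj]

lemma conjTranspose_matrixCpow_mul (hA : A.PosSemidef) (z : ℂ) :
    (matrixCpow hA z)ᴴ * matrixCpow hA z = matrixCpow hA (2 * z.re : ℝ) := by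
  rw [conjTranspose_matrixCpow, matrixCpow_mul_matrixCpow, add_comm, Complex.star_def,
    Complex.add_conj]

lemma matrixCpow_half_mul_conjTranspose (hA : A.PosSemidef) (t : ℝ) :
    matrixCpow hA (t / 2 : ℝ) * (matrixCpow hA (t / 2 : ℝ))ᴴ = matrixCpow hA t := by
  rw [matrixCpow_mul_conjTranspose, Complex.ofReal_re, mul_div_cancel₀ _ two_ne_zero]

lemma posSemidef_matrixCpow_ofReal (hA : A.PosSemidef) (t : ℝ) :
    (matrixCpow hA t).PosSemidef :=
  matrixCpow_half_mul_conjTranspose hA t ▸ posSemidef_self_mul_conjTranspose _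

lemma matrixCpow_mul_self_mul_conjTranspose (hA : A.PosSemidef) (z : ℂ) :
    matrixCpow hA z * A * (matrixCpow hA z)ᴴ = matrixCpow hA (2 * z.re + 1 : ℝ) := by
  have exponent : z + 1 + star z = (2 * z.re + 1 : ℝ) := by
    rw [add_right_comm, Complex.star_def, Complex.add_conj, Complex.ofReal_add, Complex.ofReal_one]
  rw [matrixCpow_mul_self, conjTranspose_matrixCpow, matrixCpow_mul_matrixCpow, exponent]

lemma isStarProjection_matrixCpow_zero (hA : A.PosSemidef) :
    IsStarProjection (matrixCpow hA 0) where
  isIdempotentElem := by simp [IsIdempotentElem, matrixCpow_mul_matrixCpow]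
  isSelfAdjoint := by
    simp [isSelfAdjoint_iff, star_eq_conjTranspose, conjTranspose_matrixCpow]

lemma matrixCpow_mul_conjTranspose_le_one (hA : A.PosSemidef) {z : ℂ} (hz : z.re = 0) :
    matrixCpow hA z * (matrixCpow hA z)ᴴ ≤ 1 := by
  rw [matrixCpow_mul_conjTranspose, hz, mul_zero, Complex.ofReal_zero]
  exact (isStarProjection_matrixCpow_zero hA).le_one

end ComplexPower

section TraceInequalities

open Matrix
open scoped MatrixOrder

variable {l m n : Type*} [Fintype m] [Fintype n]

lemma norm_trace_mul_le_sqrt (X : Matrix m n ℂ) (Y : Matrix n m ℂ) :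
    ‖(X * Y).trace‖ ≤ √((X * Xᴴ).trace.re * (Yᴴ * Y).trace.re) := by
  have inner_vec (Z W : Matrix n m ℂ) :
      inner ℂ (WithLp.toLp 2 (vec Z)) (WithLp.toLp 2 (vec W)) = (Zᴴ * W).trace := by
    rw [EuclideanSpace.inner_toLp_toLp, dotProduct_comm, star_vec_dotProduct_vec]
  have cauchy_schwarz :=
    inner_mul_inner_self_le (𝕜 := ℂ) (WithLp.toLp 2 (vec Xᴴ)) (WithLp.toLp 2 (vec Y))
  rw [norm_inner_symm (WithLp.toLp 2 (vec Y)), ← sq] at cauchy_schwarz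
  simp only [inner_vec, conjTranspose_conjTranspose] at cauchy_schwarz
  exact Real.le_sqrt_of_sq_le cauchy_schwarz

lemma trace_re_mono {A B : Matrix n n ℂ} (hAB : A ≤ B) : A.trace.re ≤ B.trace.re := by
  have h := (Complex.le_def.1 (le_iff.1 hAB).trace_nonneg).1
  rwa [trace_sub, Complex.sub_re, Complex.zero_re, sub_nonneg] at h

lemma mul_mul_conjTranspose_le [DecidableEq m] [Finite l] (K : Matrix l m ℂ) {L : Matrix m n ℂ}
    (hL : L * Lᴴ ≤ 1) : (K * L) * (K * L)ᴴ ≤ K * Kᴴ := by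
  rw [le_iff]
  convert (le_iff.1 hL).mul_mul_conjTranspose_same K using 1
  simp only [conjTranspose_mul, Matrix.mul_sub, Matrix.sub_mul, Matrix.mul_one, Matrix.mul_assoc]

end TraceInequalities

section Strip

open Complex Complex.HadamardThreeLines

/-- The algebra of entire functions bounded on the closed strip `0 ≤ re z ≤ 1`, a class of
functions to which the three lines theorem applies. -/
def stripBounded : Subalgebra ℂ (ℂ → ℂ) where
  carrier := {f | Differentiable ℂ f ∧ ∃ C, ∀ z ∈ verticalClosedStrip 0 1, ‖f z‖ ≤ C}
  mul_mem' := by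
    rintro f g ⟨hf, C, hC⟩ ⟨hg, D, hD⟩
    refine ⟨hf.mul hg, C * D, fun z hz => (norm_mul_le _ _).trans ?_⟩
    exact mul_le_mul (hC z hz) (hD z hz) (norm_nonneg _) ((norm_nonneg _).trans (hC z hz))
  add_mem' := by
    rintro f g ⟨hf, C, hC⟩ ⟨hg, D, hD⟩
    exact ⟨hf.add hg, C + D, fun z hz => (norm_add_le _ _).trans (add_le_add (hC z hz) (hD z hz))⟩
  algebraMap_mem' c := ⟨differentiable_const c, ‖c‖, fun _ _ => le_rfl⟩

lemma const_mem_stripBounded (c : ℂ) : (fun _ => c) ∈ stripBounded :=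
  stripBounded.algebraMap_mem c

lemma norm_le_rpow_mul_rpow_of_mem_stripBounded {f : ℂ → ℂ} (hf : f ∈ stripBounded) {a b s : ℝ}
    (h0 : ∀ z : ℂ, z.re = 0 → ‖f z‖ ≤ a) (h1 : ∀ z : ℂ, z.re = 1 → ‖f z‖ ≤ b)
    (hs : s ∈ Set.Icc (0 : ℝ) 1) : ‖f s‖ ≤ a ^ (1 - s) * b ^ s := by
  obtain ⟨hdiff, C, hC⟩ := hf
  exact norm_le_interp_of_mem_verticalClosedStrip₀₁' f (z := s) hs hdiff.diffContOnCl
    ⟨C, Set.forall_mem_image.2 hC⟩ h0 h1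

lemma supportCpow_mem_stripBounded {φ : ℂ → ℂ} {a b : ℝ} (hφ : ∀ z, φ z = a + b * z) {x : ℝ}
    (hx : 0 ≤ x) : (fun z => supportCpow (φ z) x) ∈ stripBounded := by
  obtain rfl | hpos := hx.eq_or_lt
  · simpa only [supportCpow, if_true] using const_mem_stripBounded 0
  simp only [supportCpow, hpos.ne', if_false, hφ]
  refine ⟨fun z => ?_, Real.exp (|Real.log x| * (|a| + |b|)), fun z hz => ?_⟩
  · have : (x : ℂ) ≠ 0 := ofReal_ne_zero.2 hpos.ne'
    fun_prop (disch := simp [hpos.ne'])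
  · have re_exponent : |a + b * z.re| ≤ |a| + |b| := by
      refine (abs_add_le _ _).trans ?_
      rw [abs_mul, abs_of_nonneg hz.1]
      gcongr
      exact mul_le_of_le_one_right (abs_nonneg b) hz.2
    rw [norm_cpow_eq_rpow_re_of_pos hpos, Real.rpow_def_of_pos hpos, Real.exp_le_exp]
    calc Real.log x * (a + b * z : ℂ).re ≤ |Real.log x| * |(a + b * z : ℂ).re| :=
          (le_abs_self _).trans (abs_mul _ _).le
      _ ≤ |Real.log x| * (|a| + |b|) := by
          gcongr
          simpa using re_exponent

variable {l m n : Type*}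

/-- A matrix-valued function all of whose entries are entire and bounded on the closed strip
`0 ≤ re z ≤ 1`. -/
def IsStripBounded (F : ℂ → Matrix m n ℂ) : Prop := ∀ i j, (fun z => F z i j) ∈ stripBounded

namespace IsStripBounded

lemma const (M : Matrix m n ℂ) : IsStripBounded fun _ => M :=
  fun i j => const_mem_stripBounded (M i j)

lemma mul [Fintype m] {F : ℂ → Matrix l m ℂ} {G : ℂ → Matrix m n ℂ} (hF : IsStripBounded F)
    (hG : IsStripBounded G) : IsStripBounded fun z => F z * G z := fun i j => by
  have h := sum_mem fun k (_ : k ∈ Finset.univ) => mul_mem (hF i k) (hG k j)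
  convert h using 1
  funext z
  simp [Matrix.mul_apply]

lemma trace_mem [Fintype m] {F : ℂ → Matrix m m ℂ} (hF : IsStripBounded F) :
    (fun z => (F z).trace) ∈ stripBounded := by
  convert sum_mem fun i (_ : i ∈ Finset.univ) => hF i i using 1
  funext z
  simp [Matrix.trace]

end IsStripBounded

lemma isStripBounded_matrixCpow [Fintype m] [DecidableEq m] {A : Matrix m m ℂ}
    (hA : A.PosSemidef) {φ : ℂ → ℂ} {a b : ℝ} (hφ : ∀ z, φ z = a + b * z) :
    IsStripBounded fun z => matrixCpow hA (φ z) := by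
  simp only [matrixCpow, spectralHom_apply]
  refine ((IsStripBounded.const _).mul fun i j => ?_).mul (IsStripBounded.const _)
  obtain rfl | hij := eq_or_ne i j
  · simpa only [Matrix.diagonal_apply_eq] using
      supportCpow_mem_stripBounded hφ (hA.eigenvalues_nonneg i)
  · simpa only [Matrix.diagonal_apply_ne _ hij] using const_mem_stripBounded 0

end Strip

section Interpolation

open Matrix
open scoped MatrixOrder

variable {m n : Type*} [Fintype m] [Fintype n] [DecidableEq n] (M : Matrix m n ℂ)

/-- The complex power `(Mᴴ M) ^ z = |M| ^ (2 z)`. -/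
noncomputable def gramCpow (z : ℂ) : Matrix n n ℂ :=
  matrixCpow (posSemidef_conjTranspose_mul_self M) z

lemma mpow_conjTranspose_mul_self (t : ℝ) : mpow (Mᴴ * M) t = gramCpow M t :=
  mpow_eq_matrixCpow _ t

lemma gramCpow_mul_gramCpow (z w : ℂ) : gramCpow M z * gramCpow M w = gramCpow M (z + w) :=
  matrixCpow_mul_matrixCpow _ z w

lemma trace_gramCpow_ofReal_nonneg (p : ℝ) : 0 ≤ (gramCpow M p).trace :=
  (posSemidef_matrixCpow_ofReal _ p).trace_nonneg

lemma gramCpow_mul_conjTranspose_mul_conjTranspose {w : ℂ} {p : ℝ} (hw : w.re = (p - 1) / 2) :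
    (gramCpow M w * Mᴴ) * (gramCpow M w * Mᴴ)ᴴ = gramCpow M p := by
  have h := matrixCpow_mul_self_mul_conjTranspose (posSemidef_conjTranspose_mul_self M) w
  rw [hw, mul_div_cancel₀ _ two_ne_zero, sub_add_cancel] at h
  simpa only [gramCpow, conjTranspose_mul, conjTranspose_conjTranspose, Matrix.mul_assoc] using h

lemma norm_trace_gramCpow_mul_le_sqrt (K : Matrix m n ℂ) {w : ℂ} {p : ℝ}
    (hw : w.re = (p - 1) / 2) :
    ‖(gramCpow M w * Mᴴ * K).trace‖ ≤ √((gramCpow M p).trace.re * (Kᴴ * K).trace.re) := by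
  simpa only [gramCpow_mul_conjTranspose_mul_conjTranspose M hw] using
    norm_trace_mul_le_sqrt (gramCpow M w * Mᴴ) K

lemma norm_trace_gramCpow_mul_le [DecidableEq m] {K : Matrix m n ℂ} (hK : K * Kᴴ ≤ 1) {w : ℂ}
    {p : ℝ} (hw : w.re = p - 1 / 2) :
    ‖(gramCpow M w * Mᴴ * K).trace‖ ≤ (gramCpow M p).trace.re := by
  let X := gramCpow M (p / 2 : ℝ)
  let Y := gramCpow M (w - (p / 2 : ℝ)) * Mᴴ
  have hX : X * Xᴴ = gramCpow M p := matrixCpow_half_mul_conjTranspose _ p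
  have hY : Y * Yᴴ = gramCpow M p := gramCpow_mul_conjTranspose_mul_conjTranspose M <| by
    rw [Complex.sub_re, Complex.ofReal_re, hw]
    ring
  have hXY : X * Y = gramCpow M w * Mᴴ := by
    rw [← Matrix.mul_assoc, gramCpow_mul_gramCpow, add_sub_cancel]
  have hYK : ((Y * K)ᴴ * (Y * K)).trace.re ≤ (gramCpow M p).trace.re := by
    rw [trace_mul_comm, ← hY]
    exact trace_re_mono (mul_mul_conjTranspose_le Y hK)
  have hT := (Complex.le_def.1 (trace_gramCpow_ofReal_nonneg M p)).1
  calc ‖(gramCpow M w * Mᴴ * K).trace‖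
      = ‖(X * (Y * K)).trace‖ := by rw [← hXY, Matrix.mul_assoc]
    _ ≤ √((X * Xᴴ).trace.re * ((Y * K)ᴴ * (Y * K)).trace.re) := norm_trace_mul_le_sqrt X (Y * K)
    _ ≤ √((gramCpow M p).trace.re * (gramCpow M p).trace.re) := by rw [hX]; gcongr
    _ = (gramCpow M p).trace.re := Real.sqrt_mul_self hT

lemma le_of_le_rpow_mul_sqrt_rpow {T τ s : ℝ} (hτ : 0 ≤ τ) (hs : 0 < s)
    (h : T ≤ T ^ (1 - s) * √(T * τ) ^ s) : T ≤ τ := by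
  by_contra! hlt
  have hT : 0 < T := hτ.trans_lt hlt
  have sqrt_lt : √(T * τ) < T := (Real.sqrt_lt' hT).2 (by nlinarith)
  refine h.not_gt ?_
  calc T ^ (1 - s) * √(T * τ) ^ s < T ^ (1 - s) * T ^ s := by gcongr
    _ = T := by rw [← Real.rpow_add hT, sub_add_cancel, Real.rpow_one]

theorem trace_gramCpow_inv_le_of_isStripBounded [DecidableEq m] {F : ℂ → Matrix m n ℂ}
    (hF : IsStripBounded F) {τ : ℝ} (h0 : ∀ z : ℂ, z.re = 0 → F z * (F z)ᴴ ≤ 1)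
    (h1 : ∀ z : ℂ, z.re = 1 → ((F z)ᴴ * F z).trace.re ≤ τ) {s : ℝ} (hs : s ∈ Set.Ioc (0 : ℝ) 1) :
    (gramCpow (F s) (s⁻¹ : ℝ)).trace.re ≤ τ := by
  set M := F s
  set T := (gramCpow M (s⁻¹ : ℝ)).trace.re
  have hT : 0 ≤ T := (Complex.le_def.1 (trace_gramCpow_ofReal_nonneg M _)).1
  have hτ : 0 ≤ τ := le_trans
    (Complex.le_def.1 (posSemidef_conjTranspose_mul_self (F 1)).trace_nonneg).1
    (h1 1 Complex.one_re)
  let φ : ℂ → ℂ := fun z => (s⁻¹ - 1 / 2 : ℝ) + (-(s⁻¹ / 2) : ℝ) * z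
  have re_φ (z : ℂ) : (φ z).re = s⁻¹ - 1 / 2 - s⁻¹ / 2 * z.re := by
    rw [Complex.add_re, Complex.re_ofReal_mul, Complex.ofReal_re]
    ring
  have φ_s : φ s + 1 = (s⁻¹ : ℝ) := by
    have := Complex.ofReal_ne_zero.2 hs.1.ne'
    simp only [φ]
    push_cast
    field
  let g : ℂ → ℂ := fun z => (gramCpow M (φ z) * Mᴴ * F z).trace
  have g_mem : g ∈ stripBounded :=
    (((isStripBounded_matrixCpow _ fun _ => rfl).mul (.const _)).mul hF).trace_mem
  have norm_g_re_zero (z : ℂ) (hz : z.re = 0) : ‖g z‖ ≤ T :=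
    norm_trace_gramCpow_mul_le M (h0 z hz) (by rw [re_φ, hz]; ring)
  have norm_g_re_one (z : ℂ) (hz : z.re = 1) : ‖g z‖ ≤ √(T * τ) :=
    (norm_trace_gramCpow_mul_le_sqrt M (F z) (by rw [re_φ, hz]; ring)).trans
      (Real.sqrt_le_sqrt (mul_le_mul_of_nonneg_left (h1 z hz) hT))
  have T_le_norm_g : T ≤ ‖g s‖ := by
    have : g s = (gramCpow M (s⁻¹ : ℝ)).trace := by
      simp only [g, gramCpow]
      rw [Matrix.mul_assoc, matrixCpow_mul_self, φ_s]
    exact (Complex.re_le_norm _).trans_eq (by rw [this])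
  exact le_of_le_rpow_mul_sqrt_rpow hτ hs.1 <| T_le_norm_g.trans <|
    norm_le_rpow_mul_rpow_of_mem_stripBounded g_mem norm_g_re_zero norm_g_re_one ⟨hs.1.le, hs.2⟩

end Interpolation

section AnalyticFamily

open Matrix
open scoped MatrixOrder

variable {n : Type*} [Fintype n] [DecidableEq n] {P Q R : Matrix n n ℂ} (hP : P.PosSemidef)
  (hQ : Q.PosSemidef) (hR : R.PosSemidef)

/-- The analytic family `P^(z/2) Q^(-z/2) R^(z/2)` that is interpolated between `re z = 0` and
`re z = 1`. -/
noncomputable def interpolatingFamily (z : ℂ) : Matrix n n ℂ :=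
  matrixCpow hP (z / 2) * matrixCpow hQ (-(z / 2)) * matrixCpow hR (z / 2)

lemma isStripBounded_interpolatingFamily : IsStripBounded (interpolatingFamily hP hQ hR) := by
  have half (z : ℂ) : z / 2 = (0 : ℝ) + (1 / 2 : ℝ) * z := by push_cast; ring
  have neg_half (z : ℂ) : -(z / 2) = (0 : ℝ) + (-(1 / 2) : ℝ) * z := by push_cast; ring
  exact ((isStripBounded_matrixCpow hP half).mul (isStripBounded_matrixCpow hQ neg_half)).mul
    (isStripBounded_matrixCpow hR half)

lemma interpolatingFamily_mul_conjTranspose_le_one {z : ℂ} (hz : z.re = 0) :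
    interpolatingFamily hP hQ hR z * (interpolatingFamily hP hQ hR z)ᴴ ≤ 1 := by
  have half_re : (z / 2).re = 0 := by simp [hz]
  have neg_half_re : (-(z / 2)).re = 0 := by rw [Complex.neg_re, half_re, neg_zero]
  calc interpolatingFamily hP hQ hR z * (interpolatingFamily hP hQ hR z)ᴴ
      ≤ (matrixCpow hP (z / 2) * matrixCpow hQ (-(z / 2))) *
          (matrixCpow hP (z / 2) * matrixCpow hQ (-(z / 2)))ᴴ :=
        mul_mul_conjTranspose_le _ (matrixCpow_mul_conjTranspose_le_one hR half_re)
    _ ≤ matrixCpow hP (z / 2) * (matrixCpow hP (z / 2))ᴴ :=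
        mul_mul_conjTranspose_le _ (matrixCpow_mul_conjTranspose_le_one hQ neg_half_re)
    _ ≤ 1 := matrixCpow_mul_conjTranspose_le_one hP half_re

lemma trace_conjTranspose_mul_interpolatingFamily {z : ℂ} (hz : z.re = 1) :
    ((interpolatingFamily hP hQ hR z)ᴴ * interpolatingFamily hP hQ hR z).trace =
      (R * ((matrixCpow hQ (-(z / 2)))ᴴ * P * matrixCpow hQ (-(z / 2)))).trace := by
  have exponent : ((2 * (z / 2).re : ℝ) : ℂ) = 1 := by simp [hz]
  have hP1 := conjTranspose_matrixCpow_mul hP (z / 2)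
  have hR1 := matrixCpow_mul_conjTranspose hR (z / 2)
  rw [exponent, matrixCpow_one] at hP1 hR1
  conv_rhs => rw [← hP1, ← hR1, Matrix.mul_assoc, trace_mul_comm]
  simp only [interpolatingFamily, conjTranspose_mul, Matrix.mul_assoc]

lemma conjTranspose_mul_interpolatingFamily_ofReal (s : ℝ) :
    (interpolatingFamily hP hQ hR s)ᴴ * interpolatingFamily hP hQ hR s =
      matrixCpow hR (s / 2 : ℝ) * matrixCpow hQ (-(s / 2) : ℝ) * matrixCpow hP s *
        matrixCpow hQ (-(s / 2) : ℝ) * matrixCpow hR (s / 2 : ℝ) := by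
  have hP_sq := conjTranspose_matrixCpow_mul hP (s / 2 : ℝ)
  rw [Complex.ofReal_re, mul_div_cancel₀ _ two_ne_zero] at hP_sq
  have star_Q := (posSemidef_matrixCpow_ofReal hQ (-(s / 2))).isHermitian.eq
  have star_R := (posSemidef_matrixCpow_ofReal hR (s / 2)).isHermitian.eq
  rw [← hP_sq]
  push_cast at star_Q star_R ⊢
  simp only [interpolatingFamily, conjTranspose_mul, star_Q, star_R, Matrix.mul_assoc]

end AnalyticFamily

section PartialTrace

open Matrix
open scoped Kronecker

variable {a b R : Type*}

lemma one_kronecker_apply [MulZeroOneClass R] [DecidableEq a] (X : Matrix b b R) (x y : a × b) :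
    ((1 : Matrix a a R) ⊗ₖ X) x y = if x.1 = y.1 then X x.2 y.2 else 0 := by
  simp only [kroneckerMap_apply, one_apply, ite_mul, one_mul, zero_mul]

variable [Fintype a]

/-- The partial trace of a matrix on `a × b` over the left factor `a`. -/
def traceLeft [AddCommMonoid R] (M : Matrix (a × b) (a × b) R) : Matrix b b R :=
  of fun i j => ∑ k, M (k, i) (k, j)

lemma traceLeft_apply [AddCommMonoid R] (M : Matrix (a × b) (a × b) R) (i j : b) :
    traceLeft M i j = ∑ k, M (k, i) (k, j) :=
  rfl

lemma trace_traceLeft [AddCommMonoid R] [Fintype b] (M : Matrix (a × b) (a × b) R) :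
    (traceLeft M).trace = M.trace := by
  simp only [trace, diag_apply, traceLeft_apply, Fintype.sum_prod_type]
  exact Finset.sum_comm

lemma posSemidef_traceLeft [Ring R] [PartialOrder R] [StarRing R] [AddLeftMono R]
    {M : Matrix (a × b) (a × b) R} (hM : M.PosSemidef) :
    (traceLeft M).PosSemidef := by
  have eq_sum : traceLeft M = ∑ k, M.submatrix (Prod.mk k) (Prod.mk k) := by
    ext i j
    simp [traceLeft_apply, Matrix.sum_apply]
  rw [eq_sum]
  exact posSemidef_sum _ fun k _ => hM.submatrix _

variable [DecidableEq a] [Fintype b]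

lemma traceLeft_mul_one_kronecker [Semiring R] (M : Matrix (a × b) (a × b) R) (X : Matrix b b R) :
    traceLeft (M * ((1 : Matrix a a R) ⊗ₖ X)) = traceLeft M * X := by
  ext i j
  simp only [traceLeft_apply, mul_apply, Fintype.sum_prod_type, one_kronecker_apply, mul_ite,
    mul_zero, Finset.sum_mul, Finset.sum_ite_irrel, Finset.sum_const_zero, Finset.sum_ite_eq',
    Finset.mem_univ, if_true]
  exact Finset.sum_comm

lemma traceLeft_one_kronecker_mul [Semiring R] (X : Matrix b b R) (M : Matrix (a × b) (a × b) R) :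
    traceLeft (((1 : Matrix a a R) ⊗ₖ X) * M) = X * traceLeft M := by
  ext i j
  simp only [traceLeft_apply, mul_apply, Fintype.sum_prod_type, one_kronecker_apply, ite_mul,
    zero_mul, Finset.mul_sum, Finset.sum_ite_irrel, Finset.sum_const_zero, Finset.sum_ite_eq,
    Finset.mem_univ, if_true]
  exact Finset.sum_comm

/-- The embedding `X ↦ 1 ⊗ X` of a matrix algebra into a tensor product. -/
def oneKroneckerAlgHom (a : Type*) [Fintype a] [DecidableEq a] [DecidableEq b] [CommSemiring R] :
    Matrix b b R →ₐ[R] Matrix (a × b) (a × b) R :=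
  AlgHom.ofLinearMap (kroneckerBilinear (R := R) (1 : Matrix a a R)) one_kronecker_one fun X Y => by
    simpa [kroneckerBilinear] using mul_kronecker_mul (1 : Matrix a a R) 1 X Y

end PartialTrace

section Marginals

open Matrix
open scoped Kronecker

variable {dA dB dC : ℕ} (ρ : Matrix (Fin dA × Fin dB × Fin dC) (Fin dA × Fin dB × Fin dC) ℂ)

/-- The exchange of the two leftmost factors of a threefold product. -/
def swapLeft {a b c : Type*} (x : a × b × c) : b × a × c := (x.2.1, x.1, x.2.2)

lemma redBC_eq_one_kronecker : redBC ρ = (1 : Matrix (Fin dA) (Fin dA) ℂ) ⊗ₖ traceLeft ρ := by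
  ext x y
  simp [redBC, traceLeft_apply, one_apply]

lemma redC_eq_one_kronecker :
    redC ρ = (1 : Matrix (Fin dA) (Fin dA) ℂ) ⊗ₖ
      ((1 : Matrix (Fin dB) (Fin dB) ℂ) ⊗ₖ traceLeft (traceLeft ρ)) := by
  ext x y
  simp only [redC, kroneckerMap_apply, traceLeft_apply, one_apply, mul_assoc]
  rw [Finset.sum_comm]

lemma redAC_eq_submatrix :
    redAC ρ = ((1 : Matrix (Fin dB) (Fin dB) ℂ) ⊗ₖ
      traceLeft (ρ.submatrix swapLeft swapLeft)).submatrix swapLeft swapLeft := by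
  ext x y
  simp [redAC, traceLeft_apply, one_apply, swapLeft]

lemma traceLeft_redAC :
    traceLeft (redAC ρ) = (1 : Matrix (Fin dB) (Fin dB) ℂ) ⊗ₖ traceLeft (traceLeft ρ) := by
  ext x y
  simp only [redAC, kroneckerMap_apply, traceLeft_apply, one_apply, Finset.mul_sum]
  exact Finset.sum_comm

variable {ρ}

lemma posSemidef_redAC (hρ : ρ.PosSemidef) : (redAC ρ).PosSemidef :=
  redAC_eq_submatrix ρ ▸
    (PosSemidef.one.kronecker (posSemidef_traceLeft (hρ.submatrix _))).submatrix _

lemma posSemidef_redBC (hρ : ρ.PosSemidef) : (redBC ρ).PosSemidef :=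
  redBC_eq_one_kronecker ρ ▸ PosSemidef.one.kronecker (posSemidef_traceLeft hρ)

lemma posSemidef_redC (hρ : ρ.PosSemidef) : (redC ρ).PosSemidef :=
  redC_eq_one_kronecker ρ ▸ PosSemidef.one.kronecker
    (PosSemidef.one.kronecker (posSemidef_traceLeft (posSemidef_traceLeft hρ)))

lemma matrixCpow_redC (hρ : ρ.PosSemidef) (z : ℂ) :
    matrixCpow (posSemidef_redC hρ) z = (1 : Matrix (Fin dA) (Fin dA) ℂ) ⊗ₖ
      ((1 : Matrix (Fin dB) (Fin dB) ℂ) ⊗ₖ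
        matrixCpow (posSemidef_traceLeft (posSemidef_traceLeft hρ)) z) :=
  (map_matrixCpow ((oneKroneckerAlgHom (Fin dA)).comp (oneKroneckerAlgHom (Fin dB))) _
    (posSemidef_redC hρ) (redC_eq_one_kronecker ρ).symm z).symm

lemma trace_redAC_mul_one_kronecker (Z : Matrix (Fin dB × Fin dC) (Fin dB × Fin dC) ℂ) :
    (redAC ρ * ((1 : Matrix (Fin dA) (Fin dA) ℂ) ⊗ₖ Z)).trace =
      (((1 : Matrix (Fin dB) (Fin dB) ℂ) ⊗ₖ traceLeft (traceLeft ρ)) * Z).trace := by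
  rw [← trace_traceLeft, traceLeft_mul_one_kronecker, traceLeft_redAC]

lemma trace_redAC_mul_matrixCpow_redC (hρ : ρ.PosSemidef) {w : ℂ} (hw : w.re = -(1 / 2)) :
    (redAC ρ * ((matrixCpow (posSemidef_redC hρ) w)ᴴ * redBC ρ *
      matrixCpow (posSemidef_redC hρ) w)).trace = ρ.trace := by
  let C := traceLeft (traceLeft ρ)
  have hC : C.PosSemidef := posSemidef_traceLeft (posSemidef_traceLeft hρ)
  let D := matrixCpow hC w
  let I : Matrix (Fin dB) (Fin dB) ℂ := 1
  have sandwich : (matrixCpow (posSemidef_redC hρ) w)ᴴ * redBC ρ * matrixCpow (posSemidef_redC hρ) w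
      = (1 : Matrix (Fin dA) (Fin dA) ℂ) ⊗ₖ ((I ⊗ₖ Dᴴ) * traceLeft ρ * (I ⊗ₖ D)) := by
    rw [matrixCpow_redC hρ, redBC_eq_one_kronecker]
    simp only [conjTranspose_kronecker, conjTranspose_one, ← mul_kronecker_mul, Matrix.one_mul]
    rfl
  have hDCD : D * C * Dᴴ = matrixCpow hC 0 := by
    have := matrixCpow_mul_self_mul_conjTranspose hC w
    rwa [hw, show 2 * -(1 / 2 : ℝ) + 1 = 0 by norm_num, Complex.ofReal_zero] at this
  calc _ = ((I ⊗ₖ C) * ((I ⊗ₖ Dᴴ) * traceLeft ρ * (I ⊗ₖ D))).trace := by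
        rw [sandwich, trace_redAC_mul_one_kronecker]
    _ = (C * (Dᴴ * C * D)).trace := by
        rw [← trace_traceLeft, traceLeft_one_kronecker_mul, traceLeft_mul_one_kronecker,
          traceLeft_one_kronecker_mul]
    _ = (D * C * Dᴴ * C).trace := by
        rw [Matrix.mul_assoc Dᴴ, ← Matrix.mul_assoc C, trace_mul_comm, Matrix.mul_assoc C,
          trace_mul_comm C, ← Matrix.mul_assoc D]
    _ = C.trace := by rw [hDCD, matrixCpow_mul_self, zero_add, matrixCpow_one]
    _ = ρ.trace := by rw [trace_traceLeft, trace_traceLeft]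

end Marginals

theorem trace_gramCpow_interpolatingFamily_le {dA dB dC : ℕ}
    {ρ : Matrix (Fin dA × Fin dB × Fin dC) (Fin dA × Fin dB × Fin dC) ℂ} (hρ : ρ.PosSemidef)
    {s : ℝ} (hs : s ∈ Set.Ioc (0 : ℝ) 1) :
    (gramCpow (interpolatingFamily (posSemidef_redBC hρ) (posSemidef_redC hρ)
      (posSemidef_redAC hρ) s) (s⁻¹ : ℝ)).trace ≤ ρ.trace := by
  have trace_im := (Complex.le_def.1 (trace_gramCpow_ofReal_nonneg (interpolatingFamily
    (posSemidef_redBC hρ) (posSemidef_redC hρ) (posSemidef_redAC hρ) s) s⁻¹)).2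
  refine Complex.le_def.2 ⟨?_, trace_im.symm.trans (Complex.le_def.1 hρ.trace_nonneg).2⟩
  refine trace_gramCpow_inv_le_of_isStripBounded (isStripBounded_interpolatingFamily _ _ _)
    (fun z hz => interpolatingFamily_mul_conjTranspose_le_one _ _ _ hz) (fun z hz => ?_) hs
  have hw : (-(z / 2)).re = -(1 / 2) := by simp [hz]
  rw [trace_conjTranspose_mul_interpolatingFamily _ _ _ hz, trace_redAC_mul_matrixCpow_redC hρ hw]

theorem stmt_6_general {dA dB dC : ℕ}
    (ρ : Matrix (Fin dA × Fin dB × Fin dC) (Fin dA × Fin dB × Fin dC) ℂ)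
    (hρ : ρ.PosSemidef) (α : ℝ) (hα : α ∈ Set.Ico (1 / 2 : ℝ) 1) :
    (mpow (mpow (redAC ρ) ((1 - α) / (2 * α)) * mpow (redC ρ) ((α - 1) / (2 * α)) *
        mpow (redBC ρ) ((1 - α) / α) * mpow (redC ρ) ((α - 1) / (2 * α)) *
        mpow (redAC ρ) ((1 - α) / (2 * α))) (α / (1 - α))).trace ≤ ρ.trace := by
  have hα0 : 0 < α := by linarith [hα.1]
  obtain ⟨s, hs⟩ : ∃ s, s = (1 - α) / α := ⟨_, rfl⟩
  have hs_mem : s ∈ Set.Ioc (0 : ℝ) 1 :=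
    hs ▸ ⟨div_pos (by linarith [hα.2]) hα0, (div_le_one hα0).2 (by linarith [hα.1])⟩
  have half_s : (1 - α) / (2 * α) = s / 2 := by rw [hs]; field
  have neg_half_s : (α - 1) / (2 * α) = -(s / 2) := by rw [hs]; field
  have inv_s : α / (1 - α) = s⁻¹ := by rw [hs, inv_div]
  rw [half_s, neg_half_s, ← hs, inv_s, mpow_eq_matrixCpow (posSemidef_redAC hρ),
    mpow_eq_matrixCpow (posSemidef_redBC hρ), mpow_eq_matrixCpow (posSemidef_redC hρ),
    ← conjTranspose_mul_interpolatingFamily_ofReal, mpow_conjTranspose_mul_self]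
  exact trace_gramCpow_interpolatingFamily_le hρ hs_mem

theorem stmt_6 {dA dB dC : ℕ}
    (ρ : Matrix (Fin dA × Fin dB × Fin dC) (Fin dA × Fin dB × Fin dC) ℂ)
    (hρ : ρ.PosSemidef) (hρ1 : ρ.trace = 1)
    (α : ℝ) (hα : α ∈ Set.Ioo (1/2 : ℝ) 1) :
    (mpow (mpow (redAC ρ) ((1 - α)/(2*α)) * mpow (redC ρ) ((α - 1)/(2*α)) *
        mpow (redBC ρ) ((1 - α)/α) * mpow (redC ρ) ((α - 1)/(2*α)) *
        mpow (redAC ρ) ((1 - α)/(2*α))) (α/(1 - α))).trace ≤ 1 :=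
  hρ1 ▸ stmt_6_general ρ hρ α ⟨hα.1.le, hα.2⟩
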